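/- For q = 2^s with s ≥ 5, the diagonal matrix U_1^{(7)} is unitary, belongs to the third level 𝒞^{(3)} of the Clifford hierarchy, and does not belong to the Clifford group 𝒞; i.e. U_1^{(7)} is a non-Clifford gate in the third level of the Clifford hierarchy of a q-dimensional qudit. -/

import Mathlib

noncomputable section

/-- The trace map `tr : F_{2^s} → F_2 ⊆ F_{2^s}`, `tr γ = Σ_{i=0}^{s-1} γ^{2^i}`
(its values lie in the prime field `{0, 1}`). -/
def trF {F : Type} [Field F] (s : ℕ) (x : F) : F := ∑ i ∈ Finset.range s, x ^ 2 ^ i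

/-- `ε ∘ tr : F_{2^s} → ℂ`, where `ε 0 = 1` and `ε 1 = -1` on the prime field `F_2`. -/
def epsTr {F : Type} [Field F] [DecidableEq F] (s : ℕ) (x : F) : ℂ := if trF s x = 0 then 1 else -1

/-- The Pauli `X^β`: `(X^β)_{η,η'} = 1` if `η = η' + β`, else `0`. -/
def Xm {F : Type} [Field F] [Fintype F] [DecidableEq F] (β : F) : Matrix F F ℂ :=
  Matrix.of fun η η' => if η = η' + β then 1 else 0

/-- The Pauli `Z^γ`: diagonal with entry `ε(tr(γη))` at `η`. -/
def Zm {F : Type} [Field F] [Fintype F] [DecidableEq F] (s : ℕ) (γ : F) : Matrix F F ℂ :=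
  Matrix.diagonal fun η => epsTr s (γ * η)

/-- The diagonal gate `U_β^{(n)}` with diagonal entry `ε(tr(β η^n))` at `η`. -/
def Um {F : Type} [Field F] [Fintype F] [DecidableEq F] (s : ℕ) (n : ℕ) (β : F) :
    Matrix F F ℂ :=
  Matrix.diagonal fun η => epsTr s (β * η ^ n)

/-- The single-qudit Pauli group (as a set of matrices):
`{z • X^β Z^γ : z ∈ {1, i, −1, −i}, β, γ ∈ F_q}`. -/
def PauliSet (s : ℕ) (F : Type) [Field F] [Fintype F] [DecidableEq F] :
    Set (Matrix F F ℂ) :=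
  {M | ∃ z ∈ ({1, Complex.I, -1, -Complex.I} : Set ℂ), ∃ β γ : F, M = z • (Xm β * Zm s γ)}

/-- The single-qudit Clifford group: unitaries normalising the Pauli group. -/
def CliffordSet (s : ℕ) (F : Type) [Field F] [Fintype F] [DecidableEq F] :
    Set (Matrix F F ℂ) :=
  {U | U ∈ unitary (Matrix F F ℂ) ∧ ∀ P ∈ PauliSet s F, U * P * star U ∈ PauliSet s F}

/-- The third level of the Clifford hierarchy: unitaries mapping Paulis into the
Clifford group under conjugation. -/
def ThirdLevelSet (s : ℕ) (F : Type) [Field F] [Fintype F] [DecidableEq F] :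
    Set (Matrix F F ℂ) :=
  {U | U ∈ unitary (Matrix F F ℂ) ∧ ∀ P ∈ PauliSet s F, U * P * star U ∈ CliffordSet s F}

/-!
Conjugating `X^β` by a diagonal gate with phases `d` multiplies it by the diagonal gate with phases
`η ↦ d (η + β) * conj (d η)`. For sign phases `d = ε ∘ tr ∘ f` this is the difference `f ↦ Δ_[β] f`
in the exponent, and since every character of `F` has the form `η ↦ ε (tr (γ η))`, such a sign gate
is a Pauli operator exactly when the second differences of `f` at `0` have trace zero. Hence it is
Clifford exactly when the third differences at `0` have trace zero, and it is in the third level as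
soon as the fourth ones do.

As `7 = 2^0 + 2^1 + 2^2`, the function `η ↦ β η ^ 7` is a product of three additive maps: its fourth
differences vanish, and its third difference at `0` is a symmetric trilinear form. Fixing one
argument to be `1`, nondegeneracy of the trace reduces the nonvanishing of its trace to that of a
polynomial of degree `16 < q`.
-/

open scoped fwdDiff

section PhaseDeriv

variable {G R : Type*} [AddCommGroup G] [CommSemiring R] [StarRing R]

/-- The multiplicative derivative of a phase function `d` in direction `β`. For unimodular `d` the
diagonal gate `diag d` conjugates `X^β` to `X^β · diag (phaseDeriv β d)`, so taking `phaseDeriv`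
descends one level of the Clifford hierarchy. -/
def phaseDeriv (β : G) (d : G → R) : G → R := fun η => d (η + β) * star (d η)

theorem phaseDeriv_mul (β : G) (d d' : G → R) :
    phaseDeriv β (d * d') = phaseDeriv β d * phaseDeriv β d' := by
  funext η
  simp only [phaseDeriv, Pi.mul_apply, star_mul']
  ring

theorem phaseDeriv_translate (β γ : G) (d : G → R) :
    phaseDeriv β (fun η => d (η + γ)) = fun η => phaseDeriv β d (η + γ) := by
  funext η
  simp only [phaseDeriv, add_right_comm]

theorem translate_mem_unitary {d : G → R} (hd : d ∈ unitary (G → R)) (β : G) :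
    (fun η => d (η + β)) ∈ unitary (G → R) :=
  ⟨funext fun η => congrFun hd.1 (η + β), funext fun η => congrFun hd.2 (η + β)⟩

theorem phaseDeriv_mem_unitary {d : G → R} (hd : d ∈ unitary (G → R)) (β : G) :
    phaseDeriv β d ∈ unitary (G → R) :=
  mul_mem (translate_mem_unitary hd β) (Unitary.star_mem hd)

end PhaseDeriv

section WeightedShift

variable {G R : Type*} [AddCommGroup G] [DecidableEq G] [CommSemiring R]

/-- The monomial matrix `X^β · diag d` over an arbitrary abelian group of indices. Every Pauli
operator, every diagonal gate, and every conjugate of one by the other has this form. -/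
def weightedShift (β : G) (d : G → R) : Matrix G G R :=
  Matrix.of fun η η' => if η = η' + β then d η' else 0

theorem weightedShift_zero (d : G → R) : weightedShift 0 d = Matrix.diagonal d := by
  ext η η'
  by_cases h : η = η' <;> simp [weightedShift, h]

theorem weightedShift_injective (β : G) :
    Function.Injective (weightedShift β : (G → R) → Matrix G G R) := by
  intro d d' h
  funext η
  simpa [weightedShift] using congrFun (congrFun h (η + β)) η

theorem eq_of_weightedShift_eq {β β' : G} {d d' : G → R} (hd : d ≠ 0)
    (h : weightedShift β d = weightedShift β' d') : β = β' := by
  obtain ⟨η, hη⟩ := Function.ne_iff.1 hd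
  by_contra hne
  exact hη (by simpa [weightedShift, hne] using congrFun (congrFun h (η + β)) η)

theorem star_weightedShift [StarRing R] (β : G) (d : G → R) :
    star (weightedShift β d) = weightedShift (-β) (fun η => star (d (η - β))) := by
  ext η η'
  by_cases h : η = η' - β
  · simp [weightedShift, h, ← sub_eq_add_neg]
  · simp [weightedShift, h, ← sub_eq_add_neg, ← sub_eq_iff_eq_add, eq_comm]

variable [Fintype G]

theorem weightedShift_mul (β β' : G) (d d' : G → R) :
    weightedShift β d * weightedShift β' d' =
      weightedShift (β + β') (fun η => d (η + β') * d' η) := by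
  ext η η'
  simp [weightedShift, Matrix.mul_apply, add_assoc, add_comm β]

variable [StarRing R]

theorem weightedShift_conj (α β : G) (c d : G → R) :
    weightedShift α c * weightedShift β d * star (weightedShift α c) =
      weightedShift β (fun η => (phaseDeriv β c * d) (η - α)) := by
  rw [star_weightedShift, weightedShift_mul, weightedShift_mul]
  congr 1
  · abel
  · funext η
    simp only [phaseDeriv, Pi.mul_apply, sub_eq_add_neg]
    ring

theorem weightedShift_mem_unitary (β : G) {d : G → R} (hd : d ∈ unitary (G → R)) :
    weightedShift β d ∈ unitary (Matrix G G R) := by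
  have star_mul_self (η : G) : star (d η) * d η = 1 := congrFun hd.1 η
  have mul_star_self (η : G) : d η * star (d η) = 1 := congrFun hd.2 η
  have weightedShift_one : weightedShift (0 : G) (fun _ => (1 : R)) = 1 :=
    (weightedShift_zero _).trans Matrix.diagonal_one
  constructor <;>
    simp [star_weightedShift, weightedShift_mul, star_mul_self, mul_star_self, weightedShift_one,
      ← sub_eq_add_neg]

end WeightedShift

section TraceCharacter

theorem epsTr_zero (s : ℕ) {F : Type} [Field F] [DecidableEq F] : epsTr s (0 : F) = 1 := by
  simp [epsTr, trF]

theorem epsTr_eq_one_or_neg_one (s : ℕ) {F : Type} [Field F] [DecidableEq F] (x : F) :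
    epsTr s x = 1 ∨ epsTr s x = -1 :=
  ite_eq_or_eq _ _ _

theorem epsTr_mul_self (s : ℕ) {F : Type} [Field F] [DecidableEq F] (x : F) :
    epsTr s x * epsTr s x = 1 :=
  mul_self_eq_one_iff.2 (epsTr_eq_one_or_neg_one s x)

theorem epsTr_pow_four (s : ℕ) {F : Type} [Field F] [DecidableEq F] (x : F) :
    epsTr s x ^ 4 = 1 := by
  rw [show 4 = 2 * 2 from rfl, pow_mul, sq (epsTr s x), epsTr_mul_self, one_pow]

theorem star_epsTr (s : ℕ) {F : Type} [Field F] [DecidableEq F] (x : F) :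
    star (epsTr s x) = epsTr s x := by
  rcases epsTr_eq_one_or_neg_one s x with h | h <;> rw [h] <;> simp

theorem epsTr_comp_mem_unitary (s : ℕ) {ι F : Type} [Field F] [DecidableEq F] (f : ι → F) :
    (fun η => epsTr s (f η)) ∈ unitary (ι → ℂ) :=
  Unitary.mem_iff.2 (by
    constructor <;> funext η <;>
      simp only [Pi.mul_apply, Pi.star_apply, Pi.one_apply, star_epsTr, epsTr_mul_self])

variable {s : ℕ} {F : Type} [Field F] [Fintype F]

theorem trF_eq_algebraMap_trace [Algebra (ZMod 2) F] (hF : Fintype.card F = 2 ^ s) (x : F) :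
    trF s x = algebraMap (ZMod 2) F (Algebra.trace (ZMod 2) F x) := by
  have finrank_eq : Module.finrank (ZMod 2) F = s := by
    have h := Module.card_eq_pow_finrank (K := ZMod 2) (V := F)
    rw [hF, ZMod.card] at h
    exact (Nat.pow_right_injective le_rfl h).symm
  rw [FiniteField.algebraMap_trace_eq_sum_pow, finrank_eq, Nat.card_zmod, trF]

theorem trF_sq (hF : Fintype.card F = 2 ^ s) (x : F) : trF s (x ^ 2) = trF s x := by
  have h := (Finset.sum_range_succ' (fun i => x ^ 2 ^ i) s).symm.trans
    (Finset.sum_range_succ (fun i => x ^ 2 ^ i) s)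
  rw [← hF, FiniteField.pow_card, pow_zero, pow_one] at h
  simpa only [trF, ← pow_mul, ← pow_succ'] using add_right_cancel h

variable [DecidableEq F]

theorem epsTr_eq_ite_trace [Algebra (ZMod 2) F] (hF : Fintype.card F = 2 ^ s) (x : F) :
    epsTr s x = if Algebra.trace (ZMod 2) F x = 0 then 1 else -1 := by
  simp only [epsTr, trF_eq_algebraMap_trace hF, FaithfulSMul.algebraMap_eq_zero_iff]

/-- The additive character `ε ∘ tr` of `F_{2^s}`, bundled so that the duality theory of finite
abelian groups applies to it. -/
def epsTrChar (hF : Fintype.card F = 2 ^ s) : AddChar F ℂ where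
  toFun := epsTr s
  map_zero_eq_one' := epsTr_zero s
  map_add_eq_mul' x y := by
    have : CharP F 2 := charP_of_card_eq_prime_pow hF
    let := ZMod.algebra F 2
    have eq_zero_or_one : ∀ a : ZMod 2, a = 0 ∨ a = 1 := by decide
    have sign_add (a b : ZMod 2) : (if a + b = 0 then 1 else -1 : ℂ) =
        (if a = 0 then 1 else -1) * (if b = 0 then 1 else -1) := by
      rcases eq_zero_or_one a with rfl | rfl <;> rcases eq_zero_or_one b with rfl | rfl <;>
        simp [CharTwo.add_self_eq_zero]
    simp only [epsTr_eq_ite_trace hF, map_add, sign_add]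

theorem epsTr_sq (hF : Fintype.card F = 2 ^ s) (x : F) : epsTr s (x ^ 2) = epsTr s x := by
  rw [epsTr, trF_sq hF, epsTr]

theorem epsTr_add (hF : Fintype.card F = 2 ^ s) (x y : F) :
    epsTr s (x + y) = epsTr s x * epsTr s y :=
  (epsTrChar hF).map_add_eq_mul x y

theorem epsTrChar_isPrimitive (hF : Fintype.card F = 2 ^ s) : (epsTrChar hF).IsPrimitive := by
  have : CharP F 2 := charP_of_card_eq_prime_pow hF
  let := ZMod.algebra F 2
  obtain ⟨x, hx⟩ : ∃ x, Algebra.trace (ZMod 2) F x ≠ 0 :=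
    DFunLike.ne_iff.1 (Algebra.trace_ne_zero (ZMod 2) F)
  refine .of_ne_one (AddChar.ne_one_iff.2 ⟨x, ?_⟩)
  have epsTr_eq_neg_one : epsTr s x = -1 := by rw [epsTr_eq_ite_trace hF, if_neg hx]
  change epsTr s x ≠ 1
  norm_num [epsTr_eq_neg_one]

theorem exists_epsTr_mul_ne_one (hF : Fintype.card F = 2 ^ s) {a : F} (ha : a ≠ 0) :
    ∃ x, epsTr s (a * x) ≠ 1 :=
  AddChar.ne_one_iff.1 (epsTrChar_isPrimitive hF ha)

theorem exists_addChar_eq_epsTr_mul (hF : Fintype.card F = 2 ^ s) (χ : AddChar F ℂ) :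
    ∃ γ, ∀ x, χ x = epsTr s (γ * x) := by
  have mulShift_bijective : Function.Bijective (epsTrChar hF).mulShift :=
    (Fintype.bijective_iff_injective_and_card _).2
      ⟨AddChar.to_mulShift_inj_of_isPrimitive (epsTrChar_isPrimitive hF), AddChar.card_eq.symm⟩
  obtain ⟨γ, rfl⟩ := mulShift_bijective.surjective χ
  exact ⟨γ, fun _ => rfl⟩

end TraceCharacter

section PauliPhases

/-- The phase functions `p` for which `X^β · diag p` is a Pauli operator. The fourth roots of unity
are encoded by `z ^ 4 = 1`. -/
def pauliPhases (s : ℕ) (F : Type) [Field F] [DecidableEq F] : Set (F → ℂ) :=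
  {p | ∃ z : ℂ, z ^ 4 = 1 ∧ ∃ γ : F, p = fun η => z * epsTr s (γ * η)}

theorem mem_one_I_neg_one_neg_I_iff {z : ℂ} :
    z ∈ ({1, Complex.I, -1, -Complex.I} : Set ℂ) ↔ z ^ 4 = 1 := by
  have factor : z ^ 4 - 1 = (z - 1) * ((z - Complex.I) * ((z - -1) * (z - -Complex.I))) := by
    linear_combination (z ^ 2 - 1) * Complex.I_sq
  rw [← sub_eq_zero (a := z ^ 4), factor]
  simp only [mul_eq_zero, sub_eq_zero, Set.mem_insert_iff, Set.mem_singleton_iff]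

variable {s : ℕ} {F : Type} [Field F] [DecidableEq F]

theorem one_mem_pauliPhases : 1 ∈ pauliPhases s F :=
  ⟨1, one_pow 4, 0, funext fun η => by simp [epsTr_zero]⟩

theorem ne_zero_of_mem_pauliPhases {p : F → ℂ} (hp : p ∈ pauliPhases s F) : p ≠ 0 := by
  obtain ⟨z, hz, γ, rfl⟩ := hp
  have z_ne_zero : z ≠ 0 := by rintro rfl; norm_num at hz
  refine Function.ne_iff.2 ⟨0, ?_⟩
  simpa [epsTr_zero] using z_ne_zero

theorem mem_unitary_of_mem_pauliPhases {p : F → ℂ} (hp : p ∈ pauliPhases s F) :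
    p ∈ unitary (F → ℂ) := by
  obtain ⟨z, hz, γ, rfl⟩ := hp
  have norm_z : ‖z‖ = 1 := Complex.norm_eq_one_of_pow_eq_one hz (by norm_num)
  have const_mem_unitary : (fun _ : F => z) ∈ unitary (F → ℂ) := by
    constructor <;> funext η <;> simp [Complex.conj_mul', Complex.mul_conj', norm_z]
  exact mul_mem const_mem_unitary (epsTr_comp_mem_unitary s fun η => γ * η)

theorem star_mem_pauliPhases {p : F → ℂ} (hp : p ∈ pauliPhases s F) :
    star p ∈ pauliPhases s F := by
  obtain ⟨z, hz, γ, rfl⟩ := hp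
  refine ⟨star z, by rw [← star_pow, hz, star_one], γ, funext fun η => ?_⟩
  rw [Pi.star_apply, star_mul', star_epsTr]

variable [Fintype F]

theorem mul_mem_pauliPhases (hF : Fintype.card F = 2 ^ s) {p p' : F → ℂ}
    (hp : p ∈ pauliPhases s F) (hp' : p' ∈ pauliPhases s F) : p * p' ∈ pauliPhases s F := by
  obtain ⟨z, hz, γ, rfl⟩ := hp
  obtain ⟨z', hz', γ', rfl⟩ := hp'
  refine ⟨z * z', by rw [mul_pow, hz, hz', one_mul], γ + γ', funext fun η => ?_⟩
  rw [Pi.mul_apply, add_mul, epsTr_add hF, mul_mul_mul_comm]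

theorem translate_mem_pauliPhases (hF : Fintype.card F = 2 ^ s) {p : F → ℂ}
    (hp : p ∈ pauliPhases s F) (β : F) : (fun η => p (η + β)) ∈ pauliPhases s F := by
  obtain ⟨z, hz, γ, rfl⟩ := hp
  refine ⟨z * epsTr s (γ * β), by rw [mul_pow, hz, epsTr_pow_four, one_mul], γ, funext fun η => ?_⟩
  simp only [mul_add, epsTr_add hF]
  ring

theorem translate_mem_pauliPhases_iff (hF : Fintype.card F = 2 ^ s) {p : F → ℂ} (β : F) :
    (fun η => p (η + β)) ∈ pauliPhases s F ↔ p ∈ pauliPhases s F := by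
  refine ⟨fun h => ?_, fun h => translate_mem_pauliPhases hF h β⟩
  simpa using translate_mem_pauliPhases hF h (-β)

theorem phaseDeriv_mem_pauliPhases (hF : Fintype.card F = 2 ^ s) {p : F → ℂ}
    (hp : p ∈ pauliPhases s F) (β : F) : phaseDeriv β p ∈ pauliPhases s F :=
  mul_mem_pauliPhases hF (translate_mem_pauliPhases hF hp β) (star_mem_pauliPhases hp)

theorem mem_PauliSet_iff {M : Matrix F F ℂ} :
    M ∈ PauliSet s F ↔ ∃ β, ∃ p ∈ pauliPhases s F, M = weightedShift β p := by
  have smul_Xm_mul_Zm (z : ℂ) (β γ : F) :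
      z • (Xm β * Zm s γ) = weightedShift β (fun η => z * epsTr s (γ * η)) := by
    ext η η'
    simp [Xm, Zm, weightedShift, Matrix.mul_diagonal]
  constructor
  · rintro ⟨z, hz, β, γ, rfl⟩
    exact ⟨β, _, ⟨z, mem_one_I_neg_one_neg_I_iff.1 hz, γ, rfl⟩, smul_Xm_mul_Zm z β γ⟩
  · rintro ⟨β, _, ⟨z, hz, γ, rfl⟩, rfl⟩
    exact ⟨z, mem_one_I_neg_one_neg_I_iff.2 hz, β, γ, (smul_Xm_mul_Zm z β γ).symm⟩

theorem weightedShift_mem_PauliSet_iff {β : F} {p : F → ℂ} :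
    weightedShift β p ∈ PauliSet s F ↔ p ∈ pauliPhases s F := by
  refine ⟨fun h => ?_, fun hp => mem_PauliSet_iff.2 ⟨β, p, hp, rfl⟩⟩
  obtain ⟨β', p', hp', h⟩ := mem_PauliSet_iff.1 h
  obtain rfl := eq_of_weightedShift_eq (ne_zero_of_mem_pauliPhases hp') h.symm
  rwa [weightedShift_injective _ h]

theorem weightedShift_mem_CliffordSet_iff (hF : Fintype.card F = 2 ^ s) (α : F) {c : F → ℂ}
    (hc : c ∈ unitary (F → ℂ)) :
    weightedShift α c ∈ CliffordSet s F ↔ ∀ β, phaseDeriv β c ∈ pauliPhases s F := by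
  constructor
  · rintro ⟨-, h⟩ β
    have h := h _ (weightedShift_mem_PauliSet_iff (β := β) |>.2 one_mem_pauliPhases)
    rw [weightedShift_conj, weightedShift_mem_PauliSet_iff, mul_one] at h
    simp only [sub_eq_add_neg] at h
    exact (translate_mem_pauliPhases_iff hF _).1 h
  · refine fun h => ⟨weightedShift_mem_unitary α hc, fun P hP => ?_⟩
    obtain ⟨β, p, hp, rfl⟩ := mem_PauliSet_iff.1 hP
    rw [weightedShift_conj, weightedShift_mem_PauliSet_iff]
    simp only [sub_eq_add_neg]
    exact translate_mem_pauliPhases hF (mul_mem_pauliPhases hF (h β) hp) _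

theorem weightedShift_mem_ThirdLevelSet (hF : Fintype.card F = 2 ^ s) (α : F) {c : F → ℂ}
    (hc : c ∈ unitary (F → ℂ))
    (h : ∀ β γ, phaseDeriv γ (phaseDeriv β c) ∈ pauliPhases s F) :
    weightedShift α c ∈ ThirdLevelSet s F := by
  refine ⟨weightedShift_mem_unitary α hc, fun P hP => ?_⟩
  obtain ⟨β, p, hp, rfl⟩ := mem_PauliSet_iff.1 hP
  have phase_mem_unitary : phaseDeriv β c * p ∈ unitary (F → ℂ) :=
    mul_mem (phaseDeriv_mem_unitary hc β) (mem_unitary_of_mem_pauliPhases hp)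
  simp only [weightedShift_conj, sub_eq_add_neg]
  rw [weightedShift_mem_CliffordSet_iff hF _ (translate_mem_unitary phase_mem_unitary _)]
  intro γ
  rw [phaseDeriv_translate, translate_mem_pauliPhases_iff hF, phaseDeriv_mul]
  exact mul_mem_pauliPhases hF (h β γ) (phaseDeriv_mem_pauliPhases hF hp γ)

end PauliPhases

section SignGates

variable {s : ℕ} {F : Type} [Field F] [Fintype F] [DecidableEq F]

theorem phaseDeriv_epsTr_comp (hF : Fintype.card F = 2 ^ s) (β : F) (f : F → F) :
    phaseDeriv β (fun η => epsTr s (f η)) = fun η => epsTr s (Δ_[β] f η) := by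
  have : CharP F 2 := charP_of_card_eq_prime_pow hF
  funext η
  rw [phaseDeriv, star_epsTr, fwdDiff, CharTwo.sub_eq_add, epsTr_add hF]

theorem epsTr_comp_mem_pauliPhases_iff (hF : Fintype.card F = 2 ^ s) {g : F → F} :
    (fun η => epsTr s (g η)) ∈ pauliPhases s F ↔ ∀ a b, epsTr s (Δ_[a] (Δ_[b] g) 0) = 1 := by
  have : CharP F 2 := charP_of_card_eq_prime_pow hF
  have epsTr_second_diff (a b : F) : epsTr s (Δ_[a] (Δ_[b] g) 0) =
      epsTr s (g (a + b)) * epsTr s (g a) * (epsTr s (g b) * epsTr s (g 0)) := by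
    simp only [fwdDiff, zero_add, CharTwo.sub_eq_add, epsTr_add hF]
  simp only [epsTr_second_diff]
  constructor
  · rintro ⟨z, hz, γ, hg⟩ a b
    have epsTr_g (η : F) : epsTr s (g η) = z * epsTr s (γ * η) := congrFun hg η
    have ha := epsTr_mul_self s (γ * a)
    have hb := epsTr_mul_self s (γ * b)
    simp only [epsTr_g, mul_add, epsTr_add hF, mul_zero, epsTr_zero]
    linear_combination z ^ 4 * epsTr s (γ * b) ^ 2 * ha + z ^ 4 * hb + hz
  · intro h
    let χ : AddChar F ℂ :=
      { toFun := fun η => epsTr s (g η) * epsTr s (g 0)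
        map_zero_eq_one' := epsTr_mul_self s _
        map_add_eq_mul' := fun a b => by
          linear_combination epsTr s (g a) * epsTr s (g b) * h a b
            - epsTr s (g (a + b)) * epsTr s (g 0) * epsTr s (g b) ^ 2 * epsTr_mul_self s (g a)
            - epsTr s (g (a + b)) * epsTr s (g 0) * epsTr_mul_self s (g b)
            - epsTr s (g a) * epsTr s (g b) * epsTr_mul_self s (g 0) }
    obtain ⟨γ, hγ⟩ := exists_addChar_eq_epsTr_mul hF χ
    refine ⟨epsTr s (g 0), epsTr_pow_four s _, γ, funext fun η => ?_⟩
    rw [← hγ]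
    change _ = epsTr s (g 0) * (epsTr s (g η) * epsTr s (g 0))
    rw [mul_left_comm, epsTr_mul_self, mul_one]

theorem diagonal_epsTr_mem_CliffordSet_iff (hF : Fintype.card F = 2 ^ s) (f : F → F) :
    Matrix.diagonal (fun η => epsTr s (f η)) ∈ CliffordSet s F ↔
      ∀ a b c, epsTr s (Δ_[a] (Δ_[b] (Δ_[c] f)) 0) = 1 := by
  rw [← weightedShift_zero,
    weightedShift_mem_CliffordSet_iff hF 0 (epsTr_comp_mem_unitary s f)]
  simp only [phaseDeriv_epsTr_comp hF, epsTr_comp_mem_pauliPhases_iff hF]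
  exact ⟨fun h a b c => h c a b, fun h c a b => h a b c⟩

theorem diagonal_epsTr_mem_ThirdLevelSet (hF : Fintype.card F = 2 ^ s) {f : F → F}
    (h : ∀ a b c d, epsTr s (Δ_[a] (Δ_[b] (Δ_[c] (Δ_[d] f))) 0) = 1) :
    Matrix.diagonal (fun η => epsTr s (f η)) ∈ ThirdLevelSet s F := by
  rw [← weightedShift_zero]
  refine weightedShift_mem_ThirdLevelSet hF 0 (epsTr_comp_mem_unitary s f) fun d c => ?_
  simp only [phaseDeriv_epsTr_comp hF]
  exact (epsTr_comp_mem_pauliPhases_iff hF).2 fun a b => h a b c d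

end SignGates

section PowerGates

theorem fwdDiff_three_mul_pow_apply_zero {R : Type*} [CommRing R] (p : ℕ) [ExpChar R p]
    (β : R) (i j k : ℕ) (a b c : R) :
    Δ_[a] (Δ_[b] (Δ_[c] fun x => β * x ^ (p ^ i + p ^ j + p ^ k))) 0 =
      β * (a ^ p ^ i * b ^ p ^ j * c ^ p ^ k + a ^ p ^ i * b ^ p ^ k * c ^ p ^ j +
        a ^ p ^ j * b ^ p ^ i * c ^ p ^ k + a ^ p ^ j * b ^ p ^ k * c ^ p ^ i +
        a ^ p ^ k * b ^ p ^ i * c ^ p ^ j + a ^ p ^ k * b ^ p ^ j * c ^ p ^ i) := by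
  have zero_pow_pow (n : ℕ) : (0 : R) ^ p ^ n = 0 :=
    zero_pow (pow_ne_zero n (expChar_pos R p).ne')
  simp only [fwdDiff, pow_add, add_pow_expChar_pow, zero_pow_pow]
  ring

theorem fwdDiff_four_mul_pow_eq_zero {R : Type*} [CommRing R] (p : ℕ) [ExpChar R p]
    (β : R) (i j k : ℕ) (a b c d : R) :
    Δ_[a] (Δ_[b] (Δ_[c] (Δ_[d] fun x => β * x ^ (p ^ i + p ^ j + p ^ k)))) = 0 := by
  funext x
  simp only [fwdDiff, pow_add, add_pow_expChar_pow, Pi.zero_apply]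
  ring

/- This expression is the cofactor of `c ^ 4` in the polarization of `β x ^ 7` at `(a, 1, c)`, once
`tr x = tr (x ^ 2)` has been used to turn all powers of `c` into `c ^ 4`. -/
open Polynomial in
theorem exists_linearized_ne_zero {K : Type*} [Field K] [Fintype K] (hK : 16 < Fintype.card K)
    {β : K} (hβ : β ≠ 0) :
    ∃ a : K, β * (a + a ^ 2) + β ^ 2 * (a ^ 2 + a ^ 8) + β ^ 4 * (a ^ 8 + a ^ 16) ≠ 0 := by
  let p : K[X] := C β * (X + X ^ 2) + C (β ^ 2) * (X ^ 2 + X ^ 8) + C (β ^ 4) * (X ^ 8 + X ^ 16)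
  have natDegree_p : p.natDegree ≤ 16 := by simp only [p]; compute_degree
  have coeff_p : p.coeff 16 = β ^ 4 := by
    simp only [p, coeff_add, coeff_C_mul, coeff_X, coeff_X_pow]
    norm_num
  have p_ne_zero : p ≠ 0 := fun h => pow_ne_zero 4 hβ (by rw [← coeff_p, h, coeff_zero])
  by_contra! eval_eq_zero
  refine p_ne_zero (eq_zero_of_natDegree_lt_card_of_eval_eq_zero p Function.injective_id
    (fun a => ?_) (natDegree_p.trans_lt hK))
  simpa [p] using eval_eq_zero a

variable {s : ℕ} {F : Type} [Field F] [Fintype F] [DecidableEq F]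

theorem Um_mem_unitary (s n : ℕ) (β : F) : Um s n β ∈ unitary (Matrix F F ℂ) := by
  rw [Um, ← weightedShift_zero]
  exact weightedShift_mem_unitary 0 (epsTr_comp_mem_unitary s _)

theorem Um_two_pow_add_two_pow_add_two_pow_mem_ThirdLevelSet (hF : Fintype.card F = 2 ^ s)
    (i j k : ℕ) (β : F) : Um s (2 ^ i + 2 ^ j + 2 ^ k) β ∈ ThirdLevelSet s F := by
  have : CharP F 2 := charP_of_card_eq_prime_pow hF
  refine diagonal_epsTr_mem_ThirdLevelSet hF fun a b c d => ?_
  rw [fwdDiff_four_mul_pow_eq_zero 2, Pi.zero_apply, epsTr_zero]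

theorem Um_seven_notMem_CliffordSet (hF : Fintype.card F = 2 ^ s) (hs : 5 ≤ s) {β : F}
    (hβ : β ≠ 0) : Um s 7 β ∉ CliffordSet s F := by
  have : CharP F 2 := charP_of_card_eq_prime_pow hF
  have card_gt : 16 < Fintype.card F := hF ▸ (by norm_num : 16 < 2 ^ 5).trans_le
    (Nat.pow_le_pow_right two_pos hs)
  obtain ⟨a, ha⟩ := exists_linearized_ne_zero card_gt hβ
  obtain ⟨y, hy⟩ := exists_epsTr_mul_ne_one hF ha
  obtain ⟨c, rfl⟩ : ∃ c, c ^ 4 = y := (iterateFrobeniusEquiv F 2 2).surjective y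
  have polarization : Δ_[a] (Δ_[1] (Δ_[c] fun x => β * x ^ 7)) 0 =
      β * ((a + a ^ 2) * c ^ 4 + (a + a ^ 4) * c ^ 2 + (a ^ 2 + a ^ 4) * c) :=
    (fwdDiff_three_mul_pow_apply_zero 2 β 0 1 2 a 1 c).trans (by ring)
  rw [Um, diagonal_epsTr_mem_CliffordSet_iff hF]
  intro h
  refine hy ?_
  calc
    epsTr s ((β * (a + a ^ 2) + β ^ 2 * (a ^ 2 + a ^ 8) + β ^ 4 * (a ^ 8 + a ^ 16)) * c ^ 4)
    _ = epsTr s (β * (a + a ^ 2) * c ^ 4) * epsTr s ((β * (a + a ^ 4) * c ^ 2) ^ 2) *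
          epsTr s (((β * (a ^ 2 + a ^ 4) * c) ^ 2) ^ 2) := by
      simp only [← epsTr_add hF, mul_pow, add_pow_char]
      congr 1
      ring
    _ = epsTr s (Δ_[a] (Δ_[1] (Δ_[c] fun x => β * x ^ 7)) 0) := by
      rw [polarization]
      simp only [epsTr_sq hF, ← epsTr_add hF]
      congr 1
      ring
    _ = 1 := h a 1 c

theorem U7_nonClifford_third_level_general (hs : 5 ≤ s) (hF : Fintype.card F = 2 ^ s) {β : F}
    (hβ : β ≠ 0) :
    Um s 7 β ∈ unitary (Matrix F F ℂ) ∧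
    Um s 7 β ∈ ThirdLevelSet s F ∧
    Um s 7 β ∉ CliffordSet s F :=
  ⟨Um_mem_unitary s 7 β, Um_two_pow_add_two_pow_add_two_pow_mem_ThirdLevelSet hF 0 1 2 β,
    Um_seven_notMem_CliffordSet hF hs hβ⟩

end PowerGates

/-- For `q = 2^s` with `s ≥ 5`, the diagonal gate `U_1^{(7)}` is unitary, lies in the
third level of the Clifford hierarchy, and is not Clifford. -/
theorem U7_nonClifford_third_level
    {s : ℕ} (hs : 5 ≤ s) {F : Type} [Field F] [Fintype F] [DecidableEq F]
    (hF : Fintype.card F = 2 ^ s) :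
    Um s 7 (1 : F) ∈ unitary (Matrix F F ℂ) ∧
    Um s 7 (1 : F) ∈ ThirdLevelSet s F ∧
    Um s 7 (1 : F) ∉ CliffordSet s F :=
  U7_nonClifford_third_level_general hs hF one_ne_zero
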